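/- Let (λ_{iμ}) be an SAP-frame on an open set U ⊆ ℝⁿ with associated 1-form ω, and let g_{μν} := Σ_i λ_{iμ} λ_{iν} with Levi-Civita coefficients Γ̊^α_{μν}. Then the Ricci tensor of g is expressible entirely in terms of ω and g: Ric_{μν} := ∂_α Γ̊^α_{μν} − ∂_ν Γ̊^α_{μα} + Σ_{α,ε} (Γ̊^α_{εα} Γ̊^ε_{μν} − Γ̊^α_{εν} Γ̊^ε_{μα}) satisfies Ric_{μν} = (2 − n) ω_{μ|ν} − g_{μν} ( ω^σ_{|σ} + (n − 1) ω² ) at every point of U, where ω_{μ|ν} := ∂_ν ω_μ − Σ_ε Γ^ε_{μν} ω_ε and ω^σ_{|σ} := Σ_σ (∂_σ ω^σ + Σ_ε Γ^σ_{εσ} ω^ε) are covariant derivatives with respect to the canonical connection Γ. Consequently the scalar curvature is R := Σ_{μ,ν} g^{μν} Ric_{μν} = 2(1 − n) ω^σ_{|σ} − n(n − 1) ω². -/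

import Mathlib

/-!
Three facts about the canonical connection `Γ` determine everything.

* The frame is parallel for `Γ`: `∂_ν λ_{iμ} = λ_{iε} Γ^ε_{μν}` and
  `∂_ν λ_i^α = -Γ^α_{εν} λ_i^ε`. Since `g_{μν} = λ_{iμ} λ_{iν}` and `g^{μν} = λ_i^μ λ_i^ν`, both
  the metric and its inverse are parallel too.
* `Γ` is flat, because second partial derivatives of the frame commute.
* Its torsion is `δ^α_μ ω_ν - δ^α_ν ω_μ`. A metric connection is determined by its torsion, and
  here the Koszul formula yields `Γ̊^α_{μν} = Γ^α_{μν} + A^α_{μν}` with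
  `A^α_{μν} = δ^α_ν ω_μ - g_{μν} ω^α` (`christoffel_eq_of_torsion`).

Substituting `Γ + A` in the Ricci tensor, flatness removes the terms in `Γ` alone. The terms
linear in `A` combine to `A^α_{μν|α} - A^α_{μα|ν} = (2 - n) ω_{μ|ν} - g_{μν} ω^σ_{|σ}` plus the
torsion contraction `(2 - n) ω_μ ω_ν - g_{μν} ω²`, and the quadratic ones to
`(n - 2) (ω_μ ω_ν - g_{μν} ω²)`; the products `ω_μ ω_ν` cancel (`ricci_contraction`).

The scalar curvature follows by tracing, since `g^{μν} ω_{μ|ν} = ω^σ_{|σ}` for a connection under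
which the inverse metric is parallel (`divergence_eq_trace`).

The analysis enters only through the Leibniz rule and the symmetry of second derivatives for `pd`;
the contractions are identities of finite sums at a fixed point of `U`.
-/

open scoped BigOperators

/-- Partial derivative of a scalar field on ℝⁿ in the ν-th coordinate direction. -/
noncomputable def pd {n : ℕ} (f : (Fin n → ℝ) → ℝ) (ν : Fin n) (x : Fin n → ℝ) : ℝ :=
  fderiv ℝ f x (Pi.single ν 1)

open Filter Topology

/-! ### Calculus of partial derivatives -/

section PartialDerivatives

variable {n : ℕ} {x : Fin n → ℝ}

lemma pd_congr {f h : (Fin n → ℝ) → ℝ} (hfh : f =ᶠ[𝓝 x] h) (ν : Fin n) :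
    pd f ν x = pd h ν x := by
  unfold pd; rw [hfh.fderiv_eq]

lemma pd_const (c : ℝ) (ν : Fin n) : pd (fun _ : Fin n → ℝ => c) ν x = 0 := by
  simp [pd]

lemma pd_add {f h : (Fin n → ℝ) → ℝ} (hf : DifferentiableAt ℝ f x)
    (hh : DifferentiableAt ℝ h x) (ν : Fin n) :
    pd (fun y => f y + h y) ν x = pd f ν x + pd h ν x := by
  unfold pd; rw [fderiv_fun_add hf hh]; rfl

lemma pd_sub {f h : (Fin n → ℝ) → ℝ} (hf : DifferentiableAt ℝ f x)
    (hh : DifferentiableAt ℝ h x) (ν : Fin n) :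
    pd (fun y => f y - h y) ν x = pd f ν x - pd h ν x := by
  unfold pd; rw [fderiv_fun_sub hf hh]; rfl

lemma pd_mul {f h : (Fin n → ℝ) → ℝ} (hf : DifferentiableAt ℝ f x)
    (hh : DifferentiableAt ℝ h x) (ν : Fin n) :
    pd (fun y => f y * h y) ν x = pd f ν x * h x + f x * pd h ν x := by
  unfold pd; rw [fderiv_fun_mul hf hh]
  simp [smul_eq_mul]; ring

lemma pd_sum {f : Fin n → (Fin n → ℝ) → ℝ} (hf : ∀ i, DifferentiableAt ℝ (f i) x) (ν : Fin n) :
    pd (fun y => ∑ i, f i y) ν x = ∑ i, pd (f i) ν x := by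
  unfold pd; rw [fderiv_fun_sum fun i _ => hf i]
  simp

lemma pd_sum_mul {f h : Fin n → (Fin n → ℝ) → ℝ} (hf : ∀ i, DifferentiableAt ℝ (f i) x)
    (hh : ∀ i, DifferentiableAt ℝ (h i) x) (ν : Fin n) :
    pd (fun y => ∑ i, f i y * h i y) ν x
      = ∑ i, (pd (f i) ν x * h i x + f i x * pd (h i) ν x) := by
  rw [pd_sum fun i => (hf i).fun_mul (hh i)]
  exact Finset.sum_congr rfl fun i _ => pd_mul (hf i) (hh i) ν

lemma differentiableAt_pd {f : (Fin n → ℝ) → ℝ} (hf : ContDiffAt ℝ 2 f x) (ν : Fin n) :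
    DifferentiableAt ℝ (pd f ν) x := by
  have h : DifferentiableAt ℝ (fderiv ℝ f) x :=
    (hf.fderiv_right (m := 1) (by norm_num)).differentiableAt (by norm_num)
  exact h.clm_apply (differentiableAt_const _)

lemma pd_comm {f : (Fin n → ℝ) → ℝ} (hf : ContDiffAt ℝ 2 f x) (μ ν : Fin n) :
    pd (pd f μ) ν x = pd (pd f ν) μ x := by
  have h : DifferentiableAt ℝ (fderiv ℝ f) x :=
    (hf.fderiv_right (m := 1) (by norm_num)).differentiableAt (by norm_num)
  have key : ∀ a b : Fin n,
      pd (pd f a) b x = fderiv ℝ (fderiv ℝ f) x (Pi.single b 1) (Pi.single a 1) := by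
    intro a b
    change fderiv ℝ (fun y => fderiv ℝ f y (Pi.single a 1)) x (Pi.single b 1) = _
    rw [fderiv_clm_apply h (differentiableAt_const _)]
    simp
  rw [key, key]
  exact (hf.isSymmSndFDerivAt (by simp)) _ _

end PartialDerivatives

/-! ### Tensor algebra at a point -/

section PointwiseAlgebra

variable {n : ℕ}

/-- At a point where `∂_ν g_{μσ} = Γ^ε_{μν} g_{εσ} + Γ^ε_{σν} g_{με}` (metricity of `Γ`) and the
torsion of `Γ` is `δ^α_μ ω_ν − δ^α_ν ω_μ`, the Koszul formula gives
`Γ̊^α_{μν} = Γ^α_{μν} + δ^α_ν ω_μ − g_{μν} ω^α`. -/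
lemma christoffel_eq_of_torsion (Γ : Fin n → Fin n → Fin n → ℝ) (g gi : Fin n → Fin n → ℝ)
    (w : Fin n → ℝ) (dg : Fin n → Fin n → Fin n → ℝ)
    (hsymm : ∀ μ ν, g μ ν = g ν μ)
    (hinv : ∀ μ ν, ∑ σ, gi μ σ * g σ ν = if μ = ν then (1 : ℝ) else 0)
    (htor : ∀ α μ ν, Γ α μ ν - Γ α ν μ
      = (if α = μ then w ν else 0) - (if α = ν then w μ else 0))
    (hdg : ∀ μ σ ν, dg μ σ ν = ∑ ε, (Γ ε μ ν * g ε σ + Γ ε σ ν * g μ ε)) (α μ ν : Fin n) :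
    (1 / 2) * ∑ ε, gi α ε * (dg ε ν μ + dg ε μ ν - dg μ ν ε)
      = Γ α μ ν + (if α = ν then w μ else 0) - g μ ν * ∑ β, gi α β * w β := by
  -- `G a μ ν` is `Γ` with its upper index lowered.
  set G : Fin n → Fin n → Fin n → ℝ := fun a μ ν => ∑ ε, g a ε * Γ ε μ ν with hG
  have hdG : ∀ μ σ ν, dg μ σ ν = G σ μ ν + G μ σ ν := by
    intro μ σ ν
    rw [hdg, hG, Finset.sum_add_distrib]
    congr 1 <;> refine Finset.sum_congr rfl fun ε _ => ?_
    · rw [hsymm ε σ]; ring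
    · ring
  have hGt : ∀ a μ ν, G a μ ν - G a ν μ = g a μ * w ν - g a ν * w μ := by
    intro a μ ν
    simp only [hG]
    rw [← Finset.sum_sub_distrib]
    simp_rw [← mul_sub, htor, mul_sub, Finset.sum_sub_distrib]
    simp
  have hsum : ∀ ε, dg ε ν μ + dg ε μ ν - dg μ ν ε
      = 2 * (G ε μ ν + g ε ν * w μ - g μ ν * w ε) := by
    intro ε
    rw [hdG, hdG, hdG]
    have h1 := hGt ν ε μ
    have h2 := hGt μ ε ν
    have h3 := hGt ε μ ν
    rw [hsymm ν ε, hsymm ν μ] at h1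
    rw [hsymm μ ε] at h2
    linarith
  have hraise : ∑ ε, gi α ε * G ε μ ν = Γ α μ ν := by
    simp only [hG, Finset.mul_sum]
    rw [Finset.sum_comm]
    simp_rw [← mul_assoc, ← Finset.sum_mul, hinv]
    simp
  have hδ : ∑ ε, gi α ε * g ε ν * w μ = if α = ν then w μ else 0 := by
    rw [← Finset.sum_mul, hinv]; simp
  simp_rw [hsum]
  rw [← hraise, ← hδ, Finset.mul_sum, Finset.mul_sum, ← Finset.sum_add_distrib,
    ← Finset.sum_sub_distrib]
  exact Finset.sum_congr rfl fun ε _ => by ring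

/-- The contraction identity behind the Ricci formula, at one point. Here `u α = ω^α`, while `dΓ`,
`dw`, `du` hold the partial derivatives of `Γ`, `ω_μ`, `ω^α` (last index the direction), and the
left side is `Ric` with `Γ̊^α_{μν} = Γ^α_{μν} + δ^α_ν ω_μ − g_{μν} ω^α` substituted, its
trace `Γ̊^α_{μα}` being `Γ^α_{μα} + (n - 1) ω_μ`. The hypothesis `hflat` is the vanishing of
the Ricci contraction of the curvature of `Γ`. -/
lemma ricci_contraction (Γ : Fin n → Fin n → Fin n → ℝ) (g : Fin n → Fin n → ℝ)
    (w u : Fin n → ℝ) (dΓ : Fin n → Fin n → Fin n → Fin n → ℝ) (dw du : Fin n → Fin n → ℝ)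
    (Γ₀ : Fin n → Fin n → Fin n → ℝ) (q : ℝ)
    (hsymm : ∀ μ ν, g μ ν = g ν μ)
    (htor : ∀ α μ ν, Γ α μ ν - Γ α ν μ
      = (if α = μ then w ν else 0) - (if α = ν then w μ else 0))
    (hlow : ∀ μ, ∑ ε, g μ ε * u ε = w μ)
    (hq : ∑ ε, w ε * u ε = q)
    (hΓ₀ : ∀ α μ ν, Γ₀ α μ ν = Γ α μ ν + (if α = ν then w μ else 0) - g μ ν * u α)
    (μ ν : Fin n)
    (hflat : (∑ α, dΓ α μ ν α) - (∑ α, dΓ α μ α ν)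
      + ∑ α, ∑ ε, (Γ α ε α * Γ ε μ ν - Γ α ε ν * Γ ε μ α) = 0) :
    (∑ α, (dΓ α μ ν α + (if α = ν then dw μ α else 0)
        - ((∑ ε, (Γ ε μ α * g ε ν + Γ ε ν α * g μ ε)) * u α + g μ ν * du α α)))
      - ((∑ α, dΓ α μ α ν) + ((n : ℝ) - 1) * dw μ ν)
      + ∑ α, ∑ ε, (Γ₀ α ε α * Γ₀ ε μ ν - Γ₀ α ε ν * Γ₀ ε μ α)
    = (2 - (n : ℝ)) * (dw μ ν - ∑ ε, Γ ε μ ν * w ε)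
      - g μ ν * ((∑ σ, (du σ σ + ∑ ε, Γ σ ε σ * u ε)) + ((n : ℝ) - 1) * q) := by
  have hlow' : ∀ ν, ∑ ε, g ε ν * u ε = w ν := fun ν => by
    simp_rw [hsymm _ ν]; exact hlow ν
  have htr : ∀ ε, ∑ α, Γ₀ α ε α = (∑ α, Γ α ε α) + ((n : ℝ) - 1) * w ε := by
    intro ε
    simp only [hΓ₀, Finset.sum_sub_distrib, Finset.sum_add_distrib, hlow]
    simp; ring
  -- the divergence of `Γ̊`
  have e1 : (∑ α, (dΓ α μ ν α + (if α = ν then dw μ α else 0)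
        - ((∑ ε, (Γ ε μ α * g ε ν + Γ ε ν α * g μ ε)) * u α + g μ ν * du α α)))
      = (∑ α, dΓ α μ ν α) + dw μ ν - (∑ α, ∑ ε, Γ ε μ α * g ε ν * u α)
        - (∑ α, ∑ ε, Γ ε ν α * g μ ε * u α) - g μ ν * ∑ α, du α α := by
    simp only [Finset.sum_sub_distrib, Finset.sum_add_distrib, Finset.sum_mul, Finset.mul_sum,
      add_mul, Finset.sum_ite_eq', Finset.mem_univ, if_true]
    ring
  -- the trace part of the quadratic term
  have e2 : ∑ α, ∑ ε, Γ₀ α ε α * Γ₀ ε μ ν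
      = (∑ α, ∑ ε, Γ α ε α * Γ ε μ ν) + (∑ α, Γ α ν α) * w μ
        - g μ ν * (∑ σ, ∑ ε, Γ σ ε σ * u ε)
        + ((n : ℝ) - 1) * ((∑ ε, Γ ε μ ν * w ε) + w ν * w μ - g μ ν * q) := by
    rw [Finset.sum_comm]
    simp_rw [← Finset.sum_mul, htr, hΓ₀ _ μ ν]
    have hs : ∀ ε, ((∑ α, Γ α ε α) + ((n : ℝ) - 1) * w ε)
          * (Γ ε μ ν + (if ε = ν then w μ else 0) - g μ ν * u ε)
        = (∑ α, Γ α ε α) * Γ ε μ ν + (if ε = ν then (∑ α, Γ α ε α) * w μ else 0)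
          - g μ ν * ((∑ α, Γ α ε α) * u ε)
          + ((n : ℝ) - 1) * (Γ ε μ ν * w ε + (if ε = ν then w ε * w μ else 0)
            - g μ ν * (w ε * u ε)) := by
      intro ε; split_ifs <;> ring
    simp_rw [hs]
    simp only [Finset.sum_sub_distrib, Finset.sum_add_distrib, ← Finset.mul_sum,
      Finset.sum_ite_eq', Finset.mem_univ, if_true, hq]
    rw [Finset.sum_comm (f := fun α ε => Γ α ε α * Γ ε μ ν),
      Finset.sum_comm (f := fun α ε => Γ α ε α * u ε)]
    simp only [Finset.sum_mul]
  -- the other part of the quadratic term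
  have e3 : ∑ α, ∑ ε, Γ₀ α ε ν * Γ₀ ε μ α
      = (∑ α, ∑ ε, Γ α ε ν * Γ ε μ α) + (∑ α, Γ α α ν) * w μ
        - (∑ α, ∑ ε, Γ ε α ν * g μ ε * u α) + (∑ ε, Γ ε μ ν * w ε)
        - (∑ α, ∑ ε, Γ ε μ α * g ε ν * u α) + w ν * w μ - g μ ν * q := by
    have hs : ∀ α ε, Γ₀ α ε ν * Γ₀ ε μ α
        = Γ α ε ν * Γ ε μ α + (if ε = α then Γ α ε ν * w μ else 0)
          - Γ α ε ν * g μ α * u ε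
          + (if α = ν then Γ ε μ α * w ε else 0)
          + (if α = ν then (if ε = α then w ε * w μ else 0) else 0)
          - (if α = ν then g μ α * (w ε * u ε) else 0)
          - Γ ε μ α * g ε ν * u α
          - (if ε = α then g ε ν * u α * w μ else 0)
          + (g μ α * u α) * (g ε ν * u ε) := by
      intro α ε
      rw [hΓ₀, hΓ₀]; split_ifs <;> ring
    simp_rw [hs]
    have hout : ∀ F : Fin n → Fin n → ℝ,
        ∑ α, ∑ ε, (if α = ν then F α ε else 0) = ∑ ε, F ν ε := by
      intro F; rw [Finset.sum_comm]; simp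
    simp only [Finset.sum_sub_distrib, Finset.sum_add_distrib, hout]
    rw [Finset.sum_comm (f := fun α ε => Γ α ε ν * g μ α * u ε)]
    simp only [Finset.sum_ite_eq', Finset.mem_univ, if_true, ← Finset.mul_sum, ← Finset.sum_mul,
      hlow', hlow, hq]
    ring
  -- the two torsion contractions left over
  have e4 : (∑ α, ∑ ε, Γ ε α ν * g μ ε * u α) - (∑ α, ∑ ε, Γ ε ν α * g μ ε * u α)
      = w μ * w ν - g μ ν * q := by
    rw [← Finset.sum_sub_distrib]
    simp_rw [← Finset.sum_sub_distrib, ← sub_mul, htor]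
    have hs : ∀ α ε, ((if ε = α then w ν else 0) - (if ε = ν then w α else 0)) * g μ ε * u α
        = (if ε = α then g μ ε * u α * w ν else 0)
          - (if ε = ν then g μ ε * (w α * u α) else 0) := by
      intro α ε; split_ifs <;> ring
    simp_rw [hs]
    simp only [Finset.sum_sub_distrib, Finset.sum_ite_eq', Finset.mem_univ, if_true,
      ← Finset.mul_sum, ← Finset.sum_mul, hlow, hq]
  have e5 : (∑ α, Γ α ν α) - (∑ α, Γ α α ν) = (1 - (n : ℝ)) * w ν := by
    rw [← Finset.sum_sub_distrib]
    simp_rw [htor]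
    simp; ring
  rw [e1]
  simp only [Finset.sum_sub_distrib, Finset.sum_add_distrib] at hflat ⊢
  rw [e2, e3]
  linear_combination hflat + e4 + w μ * e5

/-- The divergence of `ω^α` is the metric trace of `ω_{μ|ν}`, at a point where `hdgi` (the inverse
metric is parallel for `Γ`) holds. -/
lemma divergence_eq_trace (Γ : Fin n → Fin n → Fin n → ℝ) (gi : Fin n → Fin n → ℝ)
    (w : Fin n → ℝ) (dw : Fin n → Fin n → ℝ) (dgi : Fin n → Fin n → Fin n → ℝ)
    (hsymm : ∀ μ ν, gi μ ν = gi ν μ)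
    (hdgi : ∀ α β ν, dgi α β ν = -∑ ε, (Γ α ε ν * gi ε β + Γ β ε ν * gi α ε)) :
    ∑ σ, ((∑ β, (dgi σ β σ * w β + gi σ β * dw β σ)) + ∑ ε, Γ σ ε σ * ∑ β, gi ε β * w β)
      = ∑ μ, ∑ ν, gi μ ν * (dw μ ν - ∑ ε, Γ ε μ ν * w ε) := by
  rw [Finset.sum_comm (f := fun μ ν => gi μ ν * (dw μ ν - ∑ ε, Γ ε μ ν * w ε))]
  refine Finset.sum_congr rfl fun σ _ => ?_
  have h1 : ∑ ε, Γ σ ε σ * ∑ β, gi ε β * w β = ∑ β, (∑ ε, Γ σ ε σ * gi ε β) * w β := by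
    simp only [Finset.mul_sum, Finset.sum_mul]
    rw [Finset.sum_comm]
    simp only [mul_assoc]
  have h2 : ∑ β, (∑ ε, Γ β ε σ * gi σ ε) * w β = ∑ β, gi β σ * ∑ ε, Γ ε β σ * w ε := by
    simp only [Finset.mul_sum, Finset.sum_mul]
    rw [Finset.sum_comm]
    refine Finset.sum_congr rfl fun β _ => Finset.sum_congr rfl fun ε _ => ?_
    rw [hsymm σ β]; ring
  rw [h1]
  simp only [hdgi, Finset.sum_add_distrib, mul_sub, Finset.sum_sub_distrib, neg_add, add_mul,
    neg_mul, Finset.sum_neg_distrib, h2]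
  simp only [hsymm σ]
  ring

end PointwiseAlgebra

/-! ### The Ricci tensor of an SAP-frame -/

/-- For an SAP-frame with associated 1-form ω and metric g_{μν} = Σ_i λ_{iμ} λ_{iν},
the Ricci tensor of g is
Ric_{μν} = (2 − n) ω_{μ|ν} − g_{μν} (ω^σ_{|σ} + (n − 1) ω²), and consequently the scalar
curvature is R = 2(1 − n) ω^σ_{|σ} − n(n − 1) ω², where `|` denotes covariant
differentiation with respect to the canonical connection Γ. -/
theorem sap_ricci_scalar_curvature
    (n : ℕ) (hn : 2 ≤ n)
    (U : Set (Fin n → ℝ)) (hU : IsOpen U)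
    (lam laminv : Fin n → Fin n → (Fin n → ℝ) → ℝ)
    (hlam_smooth : ∀ i μ, ContDiffOn ℝ (⊤ : ℕ∞) (lam i μ) U)
    (hlaminv_smooth : ∀ i μ, ContDiffOn ℝ (⊤ : ℕ∞) (laminv i μ) U)
    (hinv₁ : ∀ x ∈ U, ∀ μ ν, (∑ i, laminv i μ x * lam i ν x) = if μ = ν then (1:ℝ) else 0)
    (hinv₂ : ∀ x ∈ U, ∀ i j, (∑ μ, laminv i μ x * lam j μ x) = if i = j then (1:ℝ) else 0)
    -- the canonical (Weitzenböck) connection Γ^α_{μν} = Σ_i λ_i^α ∂_ν λ_{iμ}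
    (Γ : Fin n → Fin n → Fin n → (Fin n → ℝ) → ℝ)
    (hΓ : ∀ α μ ν x, Γ α μ ν x = ∑ i, laminv i α x * pd (lam i μ) ν x)
    -- the SAP (semi-symmetry) condition: Λ^α_{μν} = δ^α_μ ω_ν − δ^α_ν ω_μ
    (ω : Fin n → (Fin n → ℝ) → ℝ)
    (hω_smooth : ∀ μ, ContDiffOn ℝ (⊤ : ℕ∞) (ω μ) U)
    (hSAP : ∀ x ∈ U, ∀ α μ ν,
      Γ α μ ν x - Γ α ν μ x
        = (if α = μ then ω ν x else 0) - (if α = ν then ω μ x else 0))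
    -- the metric g_{μν} = Σ_i λ_{iμ} λ_{iν}, its pointwise inverse g^{μν},
    -- and the Levi-Civita (Christoffel) coefficients Γ̊^α_{μν}
    (g ginv : Fin n → Fin n → (Fin n → ℝ) → ℝ)
    (hg : ∀ μ ν x, g μ ν x = ∑ i, lam i μ x * lam i ν x)
    (hginv_smooth : ∀ μ ν, ContDiffOn ℝ (⊤ : ℕ∞) (ginv μ ν) U)
    (hginv : ∀ x ∈ U, ∀ μ ν, (∑ σ, g μ σ x * ginv σ ν x) = if μ = ν then (1:ℝ) else 0)
    (Γ₀ : Fin n → Fin n → Fin n → (Fin n → ℝ) → ℝ)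
    (hΓ₀ : ∀ α μ ν x, Γ₀ α μ ν x
      = (1/2) * ∑ ε, ginv α ε x * (pd (g ε ν) μ x + pd (g ε μ) ν x - pd (g μ ν) ε x))
    -- the Ricci tensor of g
    (Ric : Fin n → Fin n → (Fin n → ℝ) → ℝ)
    (hRic : ∀ μ ν x, Ric μ ν x
      = (∑ α, pd (Γ₀ α μ ν) α x) - (∑ α, pd (Γ₀ α μ α) ν x)
        + ∑ α, ∑ ε, (Γ₀ α ε α x * Γ₀ ε μ ν x - Γ₀ α ε ν x * Γ₀ ε μ α x))
    -- ω^α = Σ_β g^{αβ} ω_β, the covariant derivative ω_{μ|ν}, the covariant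
    -- divergence ω^σ_{|σ} (all with respect to the canonical connection Γ), and ω²
    (omUp : Fin n → (Fin n → ℝ) → ℝ)
    (homUp : ∀ α x, omUp α x = ∑ β, ginv α β x * ω β x)
    (covom : Fin n → Fin n → (Fin n → ℝ) → ℝ)
    (hcovom : ∀ μ ν x, covom μ ν x = pd (ω μ) ν x - ∑ ε, Γ ε μ ν x * ω ε x)
    (divom : (Fin n → ℝ) → ℝ)
    (hdivom : ∀ x, divom x = ∑ σ, (pd (omUp σ) σ x + ∑ ε, Γ σ ε σ x * omUp ε x))
    (omSq : (Fin n → ℝ) → ℝ)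
    (homSq : ∀ x, omSq x = ∑ μ, ∑ ν, ginv μ ν x * ω μ x * ω ν x) :
    (∀ x ∈ U, ∀ μ ν,
      Ric μ ν x
        = (2 - (n : ℝ)) * covom μ ν x
          - g μ ν x * (divom x + ((n : ℝ) - 1) * omSq x)) ∧
    (∀ x ∈ U,
      (∑ μ, ∑ ν, ginv μ ν x * Ric μ ν x)
        = 2 * (1 - (n : ℝ)) * divom x - (n : ℝ) * ((n : ℝ) - 1) * omSq x) := by
  have nhdsU : ∀ x ∈ U, ∀ᶠ y in 𝓝 x, y ∈ U := fun x hx => hU.mem_nhds hx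
  have cdA : ∀ {f : (Fin n → ℝ) → ℝ}, ContDiffOn ℝ (⊤ : ℕ∞) f U → ∀ x ∈ U,
      ContDiffAt ℝ 2 f x := fun hf x hx =>
    (hf.contDiffAt (hU.mem_nhds hx)).of_le (WithTop.coe_le_coe.mpr (le_top : (2 : ℕ∞) ≤ ⊤))
  have dA : ∀ {f : (Fin n → ℝ) → ℝ}, ContDiffOn ℝ (⊤ : ℕ∞) f U → ∀ x ∈ U,
      DifferentiableAt ℝ f x := fun hf x hx => (cdA hf x hx).differentiableAt (by norm_num)
  have dlam : ∀ i μ, ∀ x ∈ U, DifferentiableAt ℝ (lam i μ) x := fun i μ => dA (hlam_smooth i μ)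
  have dinv : ∀ i μ, ∀ x ∈ U, DifferentiableAt ℝ (laminv i μ) x :=
    fun i μ => dA (hlaminv_smooth i μ)
  have dω : ∀ μ, ∀ x ∈ U, DifferentiableAt ℝ (ω μ) x := fun μ => dA (hω_smooth μ)
  have dgi : ∀ μ ν, ∀ x ∈ U, DifferentiableAt ℝ (ginv μ ν) x := fun μ ν => dA (hginv_smooth μ ν)
  have dpdlam : ∀ i μ ν, ∀ x ∈ U, DifferentiableAt ℝ (pd (lam i μ) ν) x :=
    fun i μ ν x hx => differentiableAt_pd (cdA (hlam_smooth i μ) x hx) ν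
  have Γeq : ∀ α μ ν, Γ α μ ν = fun y => ∑ i, laminv i α y * pd (lam i μ) ν y :=
    fun α μ ν => funext (hΓ α μ ν)
  have geq : ∀ μ ν, g μ ν = fun y => ∑ i, lam i μ y * lam i ν y :=
    fun μ ν => funext (hg μ ν)
  have ueq : ∀ α, omUp α = fun y => ∑ β, ginv α β y * ω β y := fun α => funext (homUp α)
  have dΓ : ∀ α μ ν, ∀ x ∈ U, DifferentiableAt ℝ (Γ α μ ν) x := by
    intro α μ ν x hx
    rw [Γeq]
    exact DifferentiableAt.fun_sum fun i _ => (dinv i α x hx).fun_mul (dpdlam i μ ν x hx)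
  have dg : ∀ μ ν, ∀ x ∈ U, DifferentiableAt ℝ (g μ ν) x := by
    intro μ ν x hx
    rw [geq]
    exact DifferentiableAt.fun_sum fun i _ => (dlam i μ x hx).fun_mul (dlam i ν x hx)
  have du : ∀ α, ∀ x ∈ U, DifferentiableAt ℝ (omUp α) x := by
    intro α x hx
    rw [ueq]
    exact DifferentiableAt.fun_sum fun i _ => (dgi α i x hx).fun_mul (dω i x hx)
  have gsymm : ∀ x, ∀ μ ν, g μ ν x = g ν μ x := by
    intro x μ ν
    rw [hg, hg]
    exact Finset.sum_congr rfl fun i _ => mul_comm _ _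
  -- the frame is parallel
  have plam : ∀ x ∈ U, ∀ i μ ν, pd (lam i μ) ν x = ∑ ε, lam i ε x * Γ ε μ ν x := by
    intro x hx i μ ν
    simp_rw [hΓ, Finset.mul_sum]
    rw [Finset.sum_comm]
    simp_rw [← mul_assoc, ← Finset.sum_mul, mul_comm (lam i _ x), hinv₂ x hx]
    simp
  -- the dual frame is parallel: differentiate `λ_i^α λ_{jα} = δ_{ij}`
  have pinv : ∀ x ∈ U, ∀ i α ν,
      pd (laminv i α) ν x = -∑ ε, Γ α ε ν x * laminv i ε x := by
    intro x hx i α ν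
    have h0 : ∀ j, ∑ μ, (pd (laminv i μ) ν x * lam j μ x + laminv i μ x * pd (lam j μ) ν x)
        = 0 := by
      intro j
      rw [← pd_sum_mul (fun μ => dinv i μ x hx) (fun μ => dlam j μ x hx),
        pd_congr (h := fun _ => if i = j then (1 : ℝ) else 0)
          ((nhdsU x hx).mono fun y hy => hinv₂ y hy i j), pd_const]
    have h1 : ∑ j, laminv j α x *
        ∑ μ, (pd (laminv i μ) ν x * lam j μ x + laminv i μ x * pd (lam j μ) ν x) = 0 := by
      simp [h0]
    simp only [Finset.mul_sum] at h1
    rw [Finset.sum_comm] at h1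
    have h2 : ∀ μ, ∑ j, laminv j α x *
          (pd (laminv i μ) ν x * lam j μ x + laminv i μ x * pd (lam j μ) ν x)
        = pd (laminv i μ) ν x * (∑ j, laminv j α x * lam j μ x)
          + Γ α μ ν x * laminv i μ x := by
      intro μ
      rw [hΓ, Finset.mul_sum, Finset.sum_mul, ← Finset.sum_add_distrib]
      exact Finset.sum_congr rfl fun j _ => by ring
    simp_rw [h2, hinv₁ x hx, Finset.sum_add_distrib] at h1
    simp at h1
    linarith
  have pg : ∀ x ∈ U, ∀ μ σ ν, pd (g μ σ) ν x
      = ∑ ε, (Γ ε μ ν x * g ε σ x + Γ ε σ ν x * g μ ε x) := by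
    intro x hx μ σ ν
    rw [geq, pd_sum_mul (fun i => dlam i μ x hx) (fun i => dlam i σ x hx)]
    simp_rw [plam x hx, hg, Finset.mul_sum, Finset.sum_mul, ← Finset.sum_add_distrib]
    rw [Finset.sum_comm]
    exact Finset.sum_congr rfl fun ε _ => Finset.sum_congr rfl fun i _ => by ring
  have ginv_left : ∀ x ∈ U, ∀ μ ν, ∑ σ, ginv μ σ x * g σ ν x = if μ = ν then (1 : ℝ) else 0 := by
    intro x hx μ ν
    have h : (Matrix.of fun a b => g a b x) * (Matrix.of fun a b => ginv a b x) = 1 := by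
      ext a b
      simpa [Matrix.mul_apply, Matrix.one_apply] using hginv x hx a b
    have h' := Matrix.ext_iff.mpr (mul_eq_one_comm.mp h) μ ν
    simpa [Matrix.mul_apply, Matrix.one_apply] using h'
  -- `g^{αβ} = λ_i^α λ_i^β`, by uniqueness of the inverse matrix
  have gieq : ∀ x ∈ U, ∀ α β, ginv α β x = ∑ i, laminv i α x * laminv i β x := by
    intro x hx α β
    have h1 : ∀ σ, ∑ ν, g σ ν x * (∑ i, laminv i ν x * laminv i β x)
        = if β = σ then (1 : ℝ) else 0 := by
      intro σ
      have : ∀ j, ∑ ν, lam j ν x * (∑ i, laminv i ν x * laminv i β x) = laminv j β x := by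
        intro j
        simp_rw [Finset.mul_sum]
        rw [Finset.sum_comm]
        simp_rw [← mul_assoc, ← Finset.sum_mul, mul_comm (lam j _ x), hinv₂ x hx]
        simp
      rw [← hinv₁ x hx β σ]
      simp_rw [hg, Finset.sum_mul]
      rw [Finset.sum_comm]
      refine Finset.sum_congr rfl fun j _ => ?_
      rw [mul_comm, ← this j, Finset.mul_sum]
      exact Finset.sum_congr rfl fun ν _ => by ring
    have h2 : ∑ σ, ginv α σ x * (∑ ν, g σ ν x * (∑ i, laminv i ν x * laminv i β x))
        = ginv α β x := by
      simp_rw [h1]; simp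
    rw [← h2]
    simp_rw [Finset.mul_sum (s := Finset.univ) (f := fun ν => g _ ν x * _)]
    rw [Finset.sum_comm]
    simp_rw [← mul_assoc, ← Finset.sum_mul, ginv_left x hx]
    simp
  have gisymm : ∀ x ∈ U, ∀ μ ν, ginv μ ν x = ginv ν μ x := by
    intro x hx μ ν
    rw [gieq x hx, gieq x hx]
    exact Finset.sum_congr rfl fun i _ => mul_comm _ _
  have pgi : ∀ x ∈ U, ∀ α β ν, pd (ginv α β) ν x
      = -∑ ε, (Γ α ε ν x * ginv ε β x + Γ β ε ν x * ginv α ε x) := by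
    intro x hx α β ν
    rw [pd_congr ((nhdsU x hx).mono fun y hy => gieq y hy α β),
      pd_sum_mul (fun i => dinv i α x hx) (fun i => dinv i β x hx)]
    simp_rw [pinv x hx, gieq x hx, Finset.mul_sum, ← Finset.sum_add_distrib]
    rw [Finset.sum_comm, ← Finset.sum_neg_distrib]
    refine Finset.sum_congr rfl fun i _ => ?_
    rw [neg_mul, mul_neg, ← neg_add, Finset.sum_mul, Finset.mul_sum, ← Finset.sum_add_distrib]
    congr 1
    exact Finset.sum_congr rfl fun ε _ => by ring
  have Γ₀eq : ∀ x ∈ U, ∀ α μ ν, Γ₀ α μ ν x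
      = Γ α μ ν x + (if α = ν then ω μ x else 0) - g μ ν x * omUp α x := by
    intro x hx α μ ν
    rw [hΓ₀, homUp]
    exact christoffel_eq_of_torsion (fun a b c => Γ a b c x) (fun a b => g a b x)
      (fun a b => ginv a b x) (fun a => ω a x) (fun a b c => pd (g a b) c x)
      (gsymm x) (ginv_left x hx) (hSAP x hx) (pg x hx) α μ ν
  have low : ∀ x ∈ U, ∀ μ, ∑ ε, g μ ε x * omUp ε x = ω μ x := by
    intro x hx μ
    simp_rw [homUp, Finset.mul_sum]
    rw [Finset.sum_comm]
    simp_rw [← mul_assoc, ← Finset.sum_mul, hginv x hx]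
    simp
  -- `Γ` is flat
  have pΓ : ∀ x ∈ U, ∀ α μ ν σ, pd (Γ α μ ν) σ x
      = (∑ i, laminv i α x * pd (pd (lam i μ) ν) σ x) - ∑ ε, Γ α ε σ x * Γ ε μ ν x := by
    intro x hx α μ ν σ
    rw [Γeq α μ ν, pd_sum_mul (fun i => dinv i α x hx) (fun i => dpdlam i μ ν x hx),
      Finset.sum_add_distrib]
    simp_rw [pinv x hx, hΓ _ μ ν, Finset.mul_sum]
    rw [Finset.sum_comm (f := fun ε i => Γ α ε σ x * (laminv i ε x * pd (lam i μ) ν x))]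
    simp_rw [neg_mul, Finset.sum_neg_distrib, Finset.sum_mul, mul_assoc]
    ring
  have flat : ∀ x ∈ U, ∀ α μ ν σ, pd (Γ α μ ν) σ x - pd (Γ α μ σ) ν x
      + ∑ ε, (Γ α ε σ x * Γ ε μ ν x - Γ α ε ν x * Γ ε μ σ x) = 0 := by
    intro x hx α μ ν σ
    rw [pΓ x hx, pΓ x hx, Finset.sum_sub_distrib]
    simp_rw [pd_comm (cdA (hlam_smooth _ μ) x hx) ν σ]
    ring
  -- the two derivative terms of the Ricci tensor
  have pΓ₀ : ∀ x ∈ U, ∀ α μ ν σ, pd (Γ₀ α μ ν) σ x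
      = pd (Γ α μ ν) σ x + (if α = ν then pd (ω μ) σ x else 0)
        - ((∑ ε, (Γ ε μ σ x * g ε ν x + Γ ε ν σ x * g μ ε x)) * omUp α x
          + g μ ν x * pd (omUp α) σ x) := by
    intro x hx α μ ν σ
    rw [pd_congr ((nhdsU x hx).mono fun y hy => Γ₀eq y hy α μ ν), ← pg x hx]
    by_cases h : α = ν
    · simp only [h, if_true]
      rw [pd_sub ((dΓ _ _ _ x hx).fun_add (dω _ x hx)) ((dg _ _ x hx).fun_mul (du _ x hx)),
        pd_add (dΓ _ _ _ x hx) (dω _ x hx), pd_mul (dg _ _ x hx) (du _ x hx)]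
    · simp only [h, if_false, add_zero]
      rw [pd_sub (dΓ _ _ _ x hx) ((dg _ _ x hx).fun_mul (du _ x hx)),
        pd_mul (dg _ _ x hx) (du _ x hx)]
  have dΓ₀ : ∀ α μ ν, ∀ x ∈ U, DifferentiableAt ℝ (Γ₀ α μ ν) x := by
    intro α μ ν x hx
    have hd : DifferentiableAt ℝ
        (fun y => Γ α μ ν y + (if α = ν then ω μ y else 0) - g μ ν y * omUp α y) x := by
      by_cases h : α = ν
      · simp only [h, if_true]
        exact ((dΓ _ _ _ x hx).fun_add (dω _ x hx)).fun_sub ((dg _ _ x hx).fun_mul (du _ x hx))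
      · simp only [h, if_false, add_zero]
        exact (dΓ _ _ _ x hx).fun_sub ((dg _ _ x hx).fun_mul (du _ x hx))
    exact hd.congr_of_eventuallyEq ((nhdsU x hx).mono fun y hy => Γ₀eq y hy α μ ν)
  have ptr : ∀ x ∈ U, ∀ μ ν, ∑ α, pd (Γ₀ α μ α) ν x
      = (∑ α, pd (Γ α μ α) ν x) + ((n : ℝ) - 1) * pd (ω μ) ν x := by
    intro x hx μ ν
    -- `Γ̊^α_{μα} = Γ^α_{μα} + (n - 1) ω_μ`
    have htr : ∀ y ∈ U, ∑ α, Γ₀ α μ α y = (∑ α, Γ α μ α y) + ((n : ℝ) - 1) * ω μ y := by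
      intro y hy
      simp only [Γ₀eq y hy, Finset.sum_sub_distrib, Finset.sum_add_distrib, low y hy]
      simp; ring
    rw [← pd_sum (fun α => dΓ₀ α μ α x hx), pd_congr ((nhdsU x hx).mono htr),
      pd_add (DifferentiableAt.fun_sum fun α _ => dΓ α μ α x hx)
        ((differentiableAt_const _).fun_mul (dω μ x hx)),
      pd_sum (fun α => dΓ α μ α x hx), pd_mul (differentiableAt_const _) (dω μ x hx), pd_const]
    ring
  have sq : ∀ x ∈ U, ∑ ε, ω ε x * omUp ε x = omSq x := by
    intro x hx
    rw [homSq]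
    simp_rw [homUp, Finset.mul_sum]
    exact Finset.sum_congr rfl fun ε _ => Finset.sum_congr rfl fun β _ => by ring
  have ricci : ∀ x ∈ U, ∀ μ ν,
      Ric μ ν x
        = (2 - (n : ℝ)) * covom μ ν x
          - g μ ν x * (divom x + ((n : ℝ) - 1) * omSq x) := by
    intro x hx μ ν
    rw [hRic, hcovom, hdivom, ptr x hx]
    simp_rw [pΓ₀ x hx]
    refine ricci_contraction (fun a b c => Γ a b c x) (fun a b => g a b x) (fun a => ω a x)
      (fun a => omUp a x) (fun a b c d => pd (Γ a b c) d x) (fun a b => pd (ω a) b x)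
      (fun a b => pd (omUp a) b x) (fun a b c => Γ₀ a b c x) (omSq x) (gsymm x) (hSAP x hx)
      (low x hx) (sq x hx) (Γ₀eq x hx) μ ν ?_
    rw [← Finset.sum_sub_distrib, ← Finset.sum_add_distrib]
    exact Finset.sum_eq_zero fun α _ => flat x hx α μ ν α
  refine ⟨ricci, fun x hx => ?_⟩
  have htrace : ∑ μ, ∑ ν, ginv μ ν x * covom μ ν x = divom x := by
    rw [hdivom]
    simp_rw [hcovom, homUp, ueq]
    simp_rw [pd_sum_mul (fun i => dgi _ i x hx) (fun i => dω i x hx)]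
    exact (divergence_eq_trace (fun a b c => Γ a b c x) (fun a b => ginv a b x)
      (fun a => ω a x) (fun a b => pd (ω a) b x) (fun a b c => pd (ginv a b) c x)
      (gisymm x hx) (pgi x hx)).symm
  have hn' : ∑ μ, ∑ ν, ginv μ ν x * g μ ν x = n := by
    have : ∀ μ, ∑ ν, ginv μ ν x * g μ ν x = 1 := fun μ => by
      simp_rw [gsymm x μ]
      rw [ginv_left x hx, if_pos rfl]
    simp [this]
  have hs : ∀ μ ν, ginv μ ν x * Ric μ ν x = (2 - (n : ℝ)) * (ginv μ ν x * covom μ ν x)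
      - (ginv μ ν x * g μ ν x) * (divom x + ((n : ℝ) - 1) * omSq x) := by
    intro μ ν
    rw [ricci x hx]; ring
  simp_rw [hs, Finset.sum_sub_distrib, ← Finset.mul_sum, ← Finset.sum_mul, htrace, hn']
  ring
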